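/- Let W₁ ⊆ ℝ^d be a convex body with B_r^d ⊆ W₁ ⊆ B_R^d for some 0 < r ≤ R < ∞, set W_ρ = ρW₁, and let μ be a finite Borel measure on ℝ^d. Then (1/|W_ρ|) ∫_{ℝ^d} μ(W_ρ − x)² dx → μ(ℝ^d)² as ρ → ∞. -/

import Mathlib

open MeasureTheory
open scoped Pointwise

/-!
By Tonelli, `∫ μ(W_ρ - x)² dx` is the integral over `(y, z)` against `μ ⊗ μ` of the overlap
`|(W_ρ - y) ∩ (W_ρ - z)|`. Divided by `|W_ρ|`, the overlap is at most `1`, and it tends to `1` for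
fixed `y` and `z` because dilations form a Følner family: rescaling by `ρ⁻¹` turns the translation
of `W_ρ` by `v` into the translation of `W₁` by `ρ⁻¹ v`, and translations act continuously on sets
of finite measure. Dominated convergence then gives the limit `(μ ⊗ μ)(ℝ^d × ℝ^d) = μ(ℝ^d)²`.
-/

open Filter Topology
open scoped ENNReal symmDiff

section FoelnerMoments

variable {G X ι : Type*} [AddGroup G] [AddAction G X] [MeasurableSpace X] {lam : Measure X}
  {l : Filter ι} {F : ι → Set X}

theorem tendsto_measure_vadd_inter_div_of_isAddFoelner (hF : IsAddFoelner G lam l F) (g : G) :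
    Tendsto (fun i ↦ lam ((g +ᵥ F i) ∩ F i) / lam (F i)) l (𝓝 1) := by
  have hlower : Tendsto (fun i ↦ 1 - lam ((g +ᵥ F i) ∆ F i) / lam (F i)) l (𝓝 1) := by
    simpa only [tsub_zero] using ENNReal.Tendsto.sub tendsto_const_nhds
      (hF.tendsto_meas_vadd_symmDiff g) (.inl ENNReal.one_ne_top)
  refine tendsto_of_tendsto_of_tendsto_of_le_of_le' hlower tendsto_const_nhds ?_ ?_
  · filter_upwards [hF.eventually_meas_ne_zero, hF.eventually_meas_ne_top] with i hi hi_top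
    rw [tsub_le_iff_right, ← ENNReal.add_div, ENNReal.le_div_iff_mul_le (.inl hi) (.inl hi_top),
      one_mul]
    calc lam (F i) ≤ lam (F i ∩ (g +ᵥ F i)) + lam (F i \ (g +ᵥ F i)) :=
          measure_le_inter_add_sdiff lam _ _
      _ ≤ lam ((g +ᵥ F i) ∩ F i) + lam ((g +ᵥ F i) ∆ F i) := by
          rw [Set.inter_comm]
          gcongr
          exact Set.subset_union_right
  · exact .of_forall fun i ↦ ENNReal.div_le_of_le_mul <| by
      simpa only [one_mul] using measure_mono Set.inter_subset_right

theorem tendsto_measure_vadd_inter_vadd_div_of_isAddFoelner [MeasurableConstVAdd G X]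
    [VAddInvariantMeasure G X lam] (hF : IsAddFoelner G lam l F) (g h : G) :
    Tendsto (fun i ↦ lam ((g +ᵥ F i) ∩ (h +ᵥ F i)) / lam (F i)) l (𝓝 1) := by
  refine (tendsto_measure_vadd_inter_div_of_isAddFoelner hF (-h + g)).congr fun i ↦ ?_
  rw [← vadd_vadd, measure_neg_vadd_inter]

variable [MeasurableSpace G] [MeasurableVAdd₂ G X] {s : Set X}

theorem measurableSet_setOfPred_vadd_mem_and_vadd_mem (hs : MeasurableSet s) :
    MeasurableSet {q : (G × G) × X | q.1.1 +ᵥ q.2 ∈ s ∧ q.1.2 +ᵥ q.2 ∈ s} :=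
  ((measurable_fst.fst.vadd measurable_snd) hs).inter
    ((measurable_fst.snd.vadd measurable_snd) hs)

variable [SFinite lam]

theorem measurable_measure_neg_vadd_inter_neg_vadd (hs : MeasurableSet s) :
    Measurable fun p : G × G ↦ lam ((-p.1 +ᵥ s) ∩ (-p.2 +ᵥ s)) := by
  simp only [← Set.preimage_vadd]
  exact measurable_measure_prodMk_left (measurableSet_setOfPred_vadd_mem_and_vadd_mem hs)

theorem lintegral_measure_mul_measure_eq_lintegral_measure_inter (μ ν : Measure G) [SFinite μ]
    [SFinite ν] (hs : MeasurableSet s) :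
    ∫⁻ x, μ {g | g +ᵥ x ∈ s} * ν {g | g +ᵥ x ∈ s} ∂lam =
      ∫⁻ p, lam ((-p.1 +ᵥ s) ∩ (-p.2 +ᵥ s)) ∂μ.prod ν := by
  have hS := measurableSet_setOfPred_vadd_mem_and_vadd_mem (G := G) hs
  simp only [← Set.preimage_vadd, ← Measure.prod_prod]
  exact (Measure.prod_apply_symm hS).symm.trans (Measure.prod_apply hS)

theorem tendsto_lintegral_measure_mul_measure_div_of_isAddFoelner [l.IsCountablyGenerated]
    [VAddInvariantMeasure G X lam] (hF : IsAddFoelner G lam l F) (μ ν : Measure G)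
    [IsFiniteMeasure μ] [IsFiniteMeasure ν] :
    Tendsto (fun i ↦ (∫⁻ x, μ {g | g +ᵥ x ∈ F i} * ν {g | g +ᵥ x ∈ F i} ∂lam) / lam (F i)) l
      (𝓝 (μ .univ * ν .univ)) := by
  let overlap (i : ι) (p : G × G) : ℝ≥0∞ := lam ((-p.1 +ᵥ F i) ∩ (-p.2 +ᵥ F i)) / lam (F i)
  have overlap_le_one (i : ι) (p : G × G) : overlap i p ≤ 1 := by
    refine ENNReal.div_le_of_le_mul ?_
    rw [one_mul, ← measure_vadd lam (-p.1) (F i)]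
    exact measure_mono Set.inter_subset_left
  have hlim : Tendsto (fun i ↦ ∫⁻ p, overlap i p ∂μ.prod ν) l (𝓝 (∫⁻ _, 1 ∂μ.prod ν)) :=
    tendsto_lintegral_filter_of_dominated_convergence 1
      (hF.eventually_measurableSet.mono fun i hi ↦
        (measurable_measure_neg_vadd_inter_neg_vadd hi).div_const _)
      (.of_forall fun i ↦ .of_forall (overlap_le_one i)) (by simp [measure_ne_top])
      (.of_forall fun p ↦ tendsto_measure_vadd_inter_vadd_div_of_isAddFoelner hF _ _)
  rw [lintegral_one, ← Set.univ_prod_univ, Measure.prod_prod] at hlim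
  refine hlim.congr' (hF.eventually_measurableSet.mono fun i hi ↦ ?_)
  simp only [overlap, div_eq_mul_inv]
  rw [lintegral_mul_const _ (measurable_measure_neg_vadd_inter_neg_vadd hi),
    lintegral_measure_mul_measure_eq_lintegral_measure_inter μ ν hi]

end FoelnerMoments

theorem tendsto_measure_vadd_symmDiff_nhds_zero {G X : Type*} [AddGroup G] [TopologicalSpace G]
    [TopologicalSpace X] [R1Space X] [MeasurableSpace X] [BorelSpace X] [AddAction G X]
    [ContinuousVAdd G X] {lam : Measure X} [lam.InnerRegularCompactLTTop]
    [IsLocallyFiniteMeasure lam] [VAddInvariantMeasure G X lam] {s : Set X}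
    (hs : NullMeasurableSet s lam) (hs_top : lam s ≠ ∞) :
    Tendsto (fun g : G ↦ lam ((g +ᵥ s) ∆ s)) (𝓝 0) (𝓝 0) := by
  let translation : C(G, C(X, X)) := ContinuousMap.curry ⟨fun p : G × X ↦ p.1 +ᵥ p.2, by fun_prop⟩
  have preimage_translation (g : G) : translation g ⁻¹' s = -g +ᵥ s := Set.preimage_vadd g s
  have h := tendsto_measure_symmDiff_preimage_nhds_zero (translation.continuous.tendsto 0)
    (.of_forall fun g ↦ measurePreserving_vadd g lam) (measurePreserving_vadd (0 : G) lam)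
    hs hs_top
  refine h.congr fun g ↦ ?_
  rw [preimage_translation, preimage_translation, neg_zero, zero_vadd, measure_neg_vadd_symmDiff,
    symmDiff_comm]

section Dilations

variable {E : Type*} [NormedAddCommGroup E] [NormedSpace ℝ E] [FiniteDimensional ℝ E]
  [MeasurableSpace E] [BorelSpace E] {lam : Measure E} [lam.IsAddHaarMeasure] {W : Set E}

theorem measure_vadd_smul_symmDiff_smul_div {ρ : ℝ} (hρ : ρ ≠ 0) (v : E) (s : Set E) :
    lam ((v +ᵥ ρ • s) ∆ (ρ • s)) / lam (ρ • s) = lam ((ρ⁻¹ • v +ᵥ s) ∆ s) / lam s := by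
  have hscale : v +ᵥ ρ • s = ρ • (ρ⁻¹ • v +ᵥ s) := by
    simp only [← Set.image_vadd, ← Set.image_smul, Set.image_image, vadd_eq_add, smul_add,
      smul_inv_smul₀ hρ]
  rw [hscale, ← Set.smul_set_symmDiff₀ hρ, Measure.addHaar_smul, Measure.addHaar_smul,
    ENNReal.mul_div_mul_left _ _ (by positivity) ENNReal.ofReal_ne_top]

theorem isAddFoelner_smul_atTop (hW : MeasurableSet W) (hW_ne_zero : lam W ≠ 0)
    (hW_ne_top : lam W ≠ ∞) : IsAddFoelner E lam atTop fun ρ : ℝ ↦ ρ • W where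
  eventually_measurableSet := (eventually_ne_atTop 0).mono fun _ ↦ hW.const_smul_of_ne_zero
  eventually_meas_ne_zero := by
    filter_upwards [eventually_ne_atTop 0] with ρ hρ
    rw [Measure.addHaar_smul]
    positivity
  eventually_meas_ne_top := .of_forall fun ρ ↦ by
    rw [Measure.addHaar_smul]
    finiteness
  tendsto_meas_vadd_symmDiff v := by
    have hv : Tendsto (fun ρ : ℝ ↦ ρ⁻¹ • v) atTop (𝓝 0) := by
      simpa only [zero_smul] using (tendsto_inv_atTop_zero (𝕜 := ℝ)).smul_const v
    have hsymmDiff : Tendsto (fun ρ : ℝ ↦ lam ((ρ⁻¹ • v +ᵥ W) ∆ W)) atTop (𝓝 0) :=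
      (tendsto_measure_vadd_symmDiff_nhds_zero hW.nullMeasurableSet hW_ne_top).comp hv
    rw [← ENNReal.zero_div (a := lam W)]
    refine (ENNReal.Tendsto.div_const hsymmDiff (.inr hW_ne_zero)).congr' ?_
    filter_upwards [eventually_ne_atTop 0] with ρ hρ
    exact (measure_vadd_smul_symmDiff_smul_div hρ v W).symm

theorem stmt4_general (hW : MeasurableSet W) (hW_ne_zero : lam W ≠ 0) (hW_ne_top : lam W ≠ ∞)
    (μ : Measure E) [IsFiniteMeasure μ] :
    Tendsto (fun ρ : ℝ ↦ (∫⁻ x, μ {y | y + x ∈ ρ • W} ^ 2 ∂lam) / lam (ρ • W)) atTop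
      (𝓝 (μ .univ ^ 2)) := by
  simpa only [sq, vadd_eq_add] using tendsto_lintegral_measure_mul_measure_div_of_isAddFoelner
    (isAddFoelner_smul_atTop hW hW_ne_zero hW_ne_top) μ μ

end Dilations

theorem stmt4 (d : ℕ) (r R : ℝ) (hr : 0 < r) (hrR : r ≤ R)
    (W₁ : Set (EuclideanSpace ℝ (Fin d))) (hconv : Convex ℝ W₁) (hcomp : IsCompact W₁)
    (hball₁ : Metric.closedBall 0 r ⊆ W₁) (hball₂ : W₁ ⊆ Metric.closedBall 0 R)
    (μ : Measure (EuclideanSpace ℝ (Fin d))) [IsFiniteMeasure μ] :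
    Filter.Tendsto
      (fun ρ : ℝ => (∫⁻ x, (μ {y | y + x ∈ ρ • W₁}) ^ 2) / volume (ρ • W₁))
      Filter.atTop (nhds ((μ Set.univ) ^ 2)) :=
  stmt4_general hcomp.measurableSet
    ((Metric.measure_closedBall_pos volume 0 hr).trans_le (measure_mono hball₁)).ne'
    hcomp.measure_ne_top μ
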